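/- Let a, b, c be pairwise distinct elements of ℂ ∖ {0,1}; define the linear polynomials in z: A₁ = (b−z)/(b−c), B₁ = (c−z)/(c−b), and the constants a₁ = (a−b)/(b−c), b₁ = (a−c)/(c−b). Then there is a ℂ-algebra isomorphism φ between the function field of the affine surface S₁: w³·t₂³·z(z−1) = (A₁·t₂ + a₁)(B₁·t₂ + b₁) (coordinates (w,t₂,z)) and the function field of the affine surface S₂: w₁³·z(z−1)·A₁B₁(A₁b₁ − B₁a₁) = t₃(t₃+1) (coordinates (z,t₃,w₁)), and φ intertwines the order-3 automorphism w ↦ ω²·w of the first with the order-3 automorphism w₁ ↦ ω²·w₁ of the second (each fixing the remaining coordinates). An isomorphism is induced by the substitution t₃ = (t₂ + a₁/A₁)/(b₁/B₁ − a₁/A₁), w₁ = w·t₂/(A₁B₁·(b₁/B₁ − a₁/A₁)) (with z unchanged). -/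

import Mathlib

/-!
Formalization conventions.

* The function field of an affine variety whose coordinate ring `ℂ[x₁,…,xₙ]/I` is an
  integral domain is formalized as `FractionRing` of that coordinate ring (for the total
  rings of fractions of the rings appearing here this is the function field).
* Two such varieties are birationally equivalent iff their function fields are
  isomorphic as `ℂ`-algebras.
-/

noncomputable section
open MvPolynomial

/-- `ω = exp(2πi/3) ∈ ℂ`, a fixed primitive cube root of unity. -/
def ω : ℂ := Complex.exp (2 * Real.pi * Complex.I / 3)

/-- Coordinate ring of the affine hypersurface `f = 0` in `ℂⁿ`. -/
abbrev HSurf {n : ℕ} (f : MvPolynomial (Fin n) ℂ) : Type :=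
  MvPolynomial (Fin n) ℂ ⧸ Ideal.span {f}

/-- Coordinate ring of the affine variety `f = g = 0` in `ℂⁿ`. -/
abbrev HSurf2 {n : ℕ} (f g : MvPolynomial (Fin n) ℂ) : Type :=
  MvPolynomial (Fin n) ℂ ⧸ Ideal.span {f, g}

/-- The image of a polynomial `p` in the function field of the hypersurface `f = 0`. -/
def cls {n : ℕ} (f : MvPolynomial (Fin n) ℂ) (p : MvPolynomial (Fin n) ℂ) :
    FractionRing (HSurf f) :=
  algebraMap (HSurf f) (FractionRing (HSurf f)) (Ideal.Quotient.mk _ p)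

/-- The image of a polynomial `p` in the function field of the variety `f = g = 0`. -/
def cls2 {n : ℕ} (f g : MvPolynomial (Fin n) ℂ) (p : MvPolynomial (Fin n) ℂ) :
    FractionRing (HSurf2 f g) :=
  algebraMap (HSurf2 f g) (FractionRing (HSurf2 f g)) (Ideal.Quotient.mk _ p)

/-- `A₁ = (b−z)/(b−c)`, a linear polynomial in `z`, in the coordinates of `S₁`
(`w = X 0`, `t₂ = X 1`, `z = X 2`). -/
def A₁ (b c : ℂ) : MvPolynomial (Fin 3) ℂ := C (b - c)⁻¹ * (C b - X 2)

/-- `B₁ = (c−z)/(c−b)`. -/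
def B₁ (b c : ℂ) : MvPolynomial (Fin 3) ℂ := C (c - b)⁻¹ * (C c - X 2)

/-- The constant `a₁ = (a−b)/(b−c)`. -/
def a₁ (a b c : ℂ) : ℂ := (a - b) / (b - c)

/-- The constant `b₁ = (a−c)/(c−b)`. -/
def b₁ (a b c : ℂ) : ℂ := (a - c) / (c - b)

/-- Defining polynomial of the affine surface `S₁ : w³·t₂³·z(z−1) = (A₁t₂+a₁)(B₁t₂+b₁)`. -/
def pS₁ (a b c : ℂ) : MvPolynomial (Fin 3) ℂ :=
  X 0 ^ 3 * X 1 ^ 3 * X 2 * (X 2 - 1)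
    - (A₁ b c * X 1 + C (a₁ a b c)) * (B₁ b c * X 1 + C (b₁ a b c))

/-- `A₁` as a polynomial in the coordinates of `S₂` (`z = X 0`, `t₃ = X 1`, `w₁ = X 2`). -/
def A₁' (b c : ℂ) : MvPolynomial (Fin 3) ℂ := C (b - c)⁻¹ * (C b - X 0)

/-- `B₁` as a polynomial in the coordinates of `S₂`. -/
def B₁' (b c : ℂ) : MvPolynomial (Fin 3) ℂ := C (c - b)⁻¹ * (C c - X 0)

/-- Defining polynomial of the affine surface `S₂ : w₁³·z(z−1)·A₁B₁(A₁b₁ − B₁a₁) = t₃(t₃+1)`. -/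
def pS₂ (a b c : ℂ) : MvPolynomial (Fin 3) ℂ :=
  X 2 ^ 3 * (X 0 * (X 0 - 1) * A₁' b c * B₁' b c
      * (A₁' b c * C (b₁ a b c) - B₁' b c * C (a₁ a b c)))
    - X 1 * (X 1 + 1)


lemma prime_of_aux {R : Type} [CommRing R] [IsDomain R] [UniqueFactorizationMonoid R]
    (P Q π : R) (hπ : Prime π) (hP : ¬ π ∣ P) (hQ : π ∣ Q) (hQ2 : ¬ π ^ 2 ∣ Q)
    (hPQ : IsRelPrime P Q) :
    Prime (Polynomial.X ^ 3 * Polynomial.C P - Polynomial.C Q : Polynomial R) := by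
  have hP0 : P ≠ 0 := fun h => hP (h ▸ dvd_zero _)
  have e : (Polynomial.X ^ 3 * Polynomial.C P - Polynomial.C Q : Polynomial R)
      = Polynomial.C P * Polynomial.X ^ 3 + Polynomial.C (-Q) := by
    rw [Polynomial.C_neg]; ring
  rw [e]
  have hd : (Polynomial.C P * Polynomial.X ^ 3 + Polynomial.C (-Q)).degree = 3 := by
    compute_degree!
  have hnd : (Polynomial.C P * Polynomial.X ^ 3 + Polynomial.C (-Q)).natDegree = 3 :=
    Polynomial.natDegree_eq_of_degree_eq_some hd
  have hc : ∀ n, (Polynomial.C P * Polynomial.X ^ 3 + Polynomial.C (-Q)).coeff n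
      = (if n = 3 then P else 0) + (if n = 0 then -Q else 0) := by
    intro n
    rw [Polynomial.coeff_add, Polynomial.coeff_C_mul_X_pow, Polynomial.coeff_C]
  rw [← UniqueFactorizationMonoid.irreducible_iff_prime]
  refine Polynomial.irreducible_of_eisenstein_criterion (P := Ideal.span {π})
    ((Ideal.span_singleton_prime hπ.ne_zero).2 hπ) ?_ ?_ ?_ ?_ ?_
  · rw [Polynomial.leadingCoeff, hnd, hc, Ideal.mem_span_singleton]
    simpa using hP
  · intro n hn
    rw [hd] at hn
    have hn : n < 3 := by exact_mod_cast hn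
    rw [hc, Ideal.mem_span_singleton, if_neg hn.ne, zero_add]
    split_ifs
    · exact (dvd_neg).2 hQ
    · exact dvd_zero _
  · rw [hd]; norm_num
  · rw [hc, Ideal.span_singleton_pow, Ideal.mem_span_singleton]
    simpa using hQ2
  · intro r hr
    rw [Polynomial.C_dvd_iff_dvd_coeff] at hr
    have h3 := hr 3
    have h0 := hr 0
    rw [hc] at h3 h0
    simp at h3 h0
    exact hPQ h3 h0

lemma not_dvd_of_eval {n : ℕ} (x : Fin n → ℂ) (p q : MvPolynomial (Fin n) ℂ)
    (hp : eval x p = 0) (hq : eval x q ≠ 0) : ¬ p ∣ q := by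
  rintro ⟨r, rfl⟩
  simp [hp] at hq

lemma irr_lin (i : Fin 2) (k : ℂ) : Irreducible (X i + C k : MvPolynomial (Fin 2) ℂ) := by
  have := irreducible_mul_X_add (1 : MvPolynomial (Fin 2) ℂ) (C k) i one_ne_zero (by simp) (by simp)
    isRelPrime_one_left
  simpa using this

lemma prime_pS₁ (a b c : ℂ) (hb0 : b ≠ 0) (hb1 : b ≠ 1)
    (hc0 : c ≠ 0) (hc1 : c ≠ 1) (hab : a ≠ b) (hac : a ≠ c) (hbc : b ≠ c) :
    Prime (pS₁ a b c) := by
  rw [← MulEquiv.prime_iff (finSuccEquiv ℂ 2)]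
  have h1 : b - c ≠ 0 := sub_ne_zero.2 hbc
  have h2 : c - b ≠ 0 := sub_ne_zero.2 hbc.symm
  have h3 : a - b ≠ 0 := sub_ne_zero.2 hab
  have h4 : a - c ≠ 0 := sub_ne_zero.2 hac
  have ha₁ : a₁ a b c ≠ 0 := div_ne_zero h3 h1
  have hb₁ : b₁ a b c ≠ 0 := div_ne_zero h4 h2
  set A : MvPolynomial (Fin 2) ℂ := C (b - c)⁻¹ * (C b - X 1) with hA
  set B : MvPolynomial (Fin 2) ℂ := C (c - b)⁻¹ * (C c - X 1) with hB
  have e : finSuccEquiv ℂ 2 (pS₁ a b c) =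
      Polynomial.X ^ 3 * Polynomial.C (X 0 ^ 3 * ((X 1 + C 0) * (X 1 + C (-1))))
        - Polynomial.C ((A * X 0 + C (a₁ a b c)) * (B * X 0 + C (b₁ a b c))) := by
    have x1 : finSuccEquiv ℂ 2 (X 1) = Polynomial.C (X 0) := finSuccEquiv_X_succ (j := 0)
    have x2 : finSuccEquiv ℂ 2 (X 2) = Polynomial.C (X 1) := finSuccEquiv_X_succ (j := 1)
    have x3 (k : ℂ) : finSuccEquiv ℂ 2 (C k) = Polynomial.C (C k) := by
      simp [finSuccEquiv_apply]
    simp only [pS₁, A₁, B₁, map_sub, map_mul, map_add, map_pow, x1, x2, x3, finSuccEquiv_X_zero,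
      hA, hB, map_one, map_zero, map_neg]
    ring
  rw [e]
  have hA0 : A ≠ 0 := by
    intro h
    have := congrArg (eval (fun _ => c)) h
    simp [hA] at this
    grind
  have hv : (0 : Fin 2) ∉ A.vars := by
    intro h
    have h' := vars_mul _ _ h
    rw [vars_C, Finset.empty_union] at h'
    have h'' := vars_sub_subset _ h'
    simp at h''
  have hirr : Irreducible (A * X 0 + C (a₁ a b c)) := by
    refine irreducible_mul_X_add _ _ _ hA0 hv (by simp) ?_
    intro r _ hr
    exact isUnit_of_dvd_unit hr ((isUnit_iff_ne_zero.2 ha₁).map C)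
  refine prime_of_aux _ _ (A * X 0 + C (a₁ a b c)) hirr.prime ?_ (dvd_mul_right _ _) ?_ ?_
  · refine not_dvd_of_eval ![- a₁ a b c, c] _ _ ?_ ?_
    · simp [hA, h1]
    · have : c + -1 ≠ 0 := by simpa [sub_eq_add_neg] using sub_ne_zero.2 hc1
      simp [ha₁, hc0, this]
  · rw [pow_two]
    intro h
    have h := (mul_dvd_mul_iff_left hirr.ne_zero).1 h
    revert h
    refine not_dvd_of_eval ![- a₁ a b c, c] _ _ ?_ ?_
    · simp [hA, h1]
    · simpa [hB] using hb₁
  · have key : ∀ (i : Fin 2) (k : ℂ) (x : Fin 2 → ℂ), x i + k = 0 →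
        eval x ((A * X 0 + C (a₁ a b c)) * (B * X 0 + C (b₁ a b c))) ≠ 0 →
        IsRelPrime (X i + C k) ((A * X 0 + C (a₁ a b c)) * (B * X 0 + C (b₁ a b c))) := by
      intro i k x hx hne
      rw [(irr_lin i k).isRelPrime_iff_not_dvd]
      exact not_dvd_of_eval x _ _ (by simpa using hx) hne
    refine IsRelPrime.mul_left (IsRelPrime.pow_left ?_) (IsRelPrime.mul_left ?_ ?_)
    · have := key 0 0 0 (by simp) (by simp [ha₁, hb₁])
      simpa using this
    · refine key 1 0 ![0, 0] (by simp) (by simp [ha₁, hb₁])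
    · refine key 1 (-1) ![0, 1] (by simp) (by simp [ha₁, hb₁])

lemma prime_pS₂ (a b c : ℂ) (ha0 : a ≠ 0) (ha1 : a ≠ 1) (hb0 : b ≠ 0) (hb1 : b ≠ 1)
    (hc0 : c ≠ 0) (hc1 : c ≠ 1) (hab : a ≠ b) (hac : a ≠ c) (hbc : b ≠ c) :
    Prime (pS₂ a b c) := by
  rw [← MulEquiv.prime_iff ((renameEquiv ℂ (Equiv.swap (0 : Fin 3) 2)).trans (finSuccEquiv ℂ 2))]
  have h1 : b - c ≠ 0 := sub_ne_zero.2 hbc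
  have h2 : c - b ≠ 0 := sub_ne_zero.2 hbc.symm
  set A : MvPolynomial (Fin 2) ℂ := C (b - c)⁻¹ * (C b - X 1) with hA
  set B : MvPolynomial (Fin 2) ℂ := C (c - b)⁻¹ * (C c - X 1) with hB
  set P := (X 1 * (X 1 - 1) * A * B * (A * C (b₁ a b c) - B * C (a₁ a b c))) with hP
  have e : ((renameEquiv ℂ (Equiv.swap (0 : Fin 3) 2)).trans (finSuccEquiv ℂ 2)) (pS₂ a b c) =
      Polynomial.X ^ 3 * Polynomial.C P
        - Polynomial.C ((X 0 + C 0) * (X 0 + C 1)) := by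
    have x1 : finSuccEquiv ℂ 2 (X 1) = Polynomial.C (X 0) := finSuccEquiv_X_succ (j := 0)
    have x2 : finSuccEquiv ℂ 2 (X 2) = Polynomial.C (X 1) := finSuccEquiv_X_succ (j := 1)
    have x3 (k : ℂ) : finSuccEquiv ℂ 2 (C k) = Polynomial.C (C k) := by
      simp [finSuccEquiv_apply]
    have s1 : Equiv.swap (0 : Fin 3) 2 1 = 1 := by decide
    simp only [pS₂, A₁', B₁', AlgEquiv.trans_apply, renameEquiv_apply, map_sub, map_mul, map_add,
      map_pow, rename_X, rename_C, Equiv.swap_apply_left, Equiv.swap_apply_right, s1,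
      x1, x2, x3, finSuccEquiv_X_zero,
      hA, hB, hP, map_one, map_zero, map_neg]
    ring
  rw [e]
  obtain ⟨d, hd⟩ := Set.Infinite.exists_notMem_finset (Set.infinite_univ (α := ℂ)) {0, 1, a, b, c}
  have hd := hd.2
  simp only [Finset.mem_insert, Finset.mem_singleton, not_or] at hd
  obtain ⟨d0, d1, da, db, dc⟩ := hd
  have hPe (t : ℂ) : eval ![t, d] P ≠ 0 := by
    have : eval ![t, d] P = d * (d - 1) * ((b - c)⁻¹ * (b - d)) * ((c - b)⁻¹ * (c - d)) *
        ((d - a) * (b - c)⁻¹) := by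
      simp [hP, hA, hB, a₁, b₁]
      left
      grind
    rw [this]
    simp [sub_eq_zero, d0, d1, da, hbc, hbc.symm, Ne.symm db, Ne.symm dc]
  have key (k : ℂ) : ¬ (X 0 + C k) ∣ P :=
    not_dvd_of_eval ![-k, d] _ _ (by simp) (hPe _)
  refine prime_of_aux _ _ (X 0 + C 0) (irr_lin 0 0).prime (key 0) (dvd_mul_right _ _) ?_ ?_
  · rw [pow_two]
    intro h
    have h := (mul_dvd_mul_iff_left (irr_lin 0 0).ne_zero).1 h
    revert h
    exact not_dvd_of_eval ![0, 0] _ _ (by simp) (by simp)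
  · exact (IsRelPrime.mul_left ((irr_lin _ _).isRelPrime_iff_not_dvd.2 (key _))
      ((irr_lin _ _).isRelPrime_iff_not_dvd.2 (key _))).symm

/-- `cls` as an algebra homomorphism. -/
def clsA {n : ℕ} (f : MvPolynomial (Fin n) ℂ) :
    MvPolynomial (Fin n) ℂ →ₐ[ℂ] FractionRing (HSurf f) :=
  (IsScalarTower.toAlgHom ℂ (HSurf f) (FractionRing (HSurf f))).comp
    (Ideal.Quotient.mkₐ ℂ (Ideal.span {f}))

lemma clsA_apply {n : ℕ} (f p : MvPolynomial (Fin n) ℂ) : clsA f p = cls f p := rfl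

lemma cls_eq_zero {n : ℕ} (f p : MvPolynomial (Fin n) ℂ) : cls f p = 0 ↔ f ∣ p := by
  unfold cls
  rw [map_eq_zero_iff _ (IsFractionRing.injective (HSurf f) (FractionRing (HSurf f))),
    Ideal.Quotient.eq_zero_iff_mem, Ideal.mem_span_singleton]

lemma clsA_eq_aeval {n : ℕ} (f : MvPolynomial (Fin n) ℂ) :
    clsA f = aeval (fun i => cls f (X i)) := by
  ext i
  simp [clsA_apply]

lemma isDomain_of_prime {n : ℕ} {f : MvPolynomial (Fin n) ℂ} (hf : Prime f) :
    IsDomain (HSurf f) := by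
  have := (Ideal.span_singleton_prime hf.ne_zero).2 hf
  exact Ideal.Quotient.isDomain _

lemma exists_div {n : ℕ} (f : MvPolynomial (Fin n) ℂ) [IsDomain (HSurf f)]
    (x : FractionRing (HSurf f)) : ∃ p q, x = clsA f p / clsA f q := by
  obtain ⟨r, s, _, rfl⟩ := IsFractionRing.div_surjective (A := HSurf f) x
  obtain ⟨p, rfl⟩ := Ideal.Quotient.mk_surjective r
  obtain ⟨q, rfl⟩ := Ideal.Quotient.mk_surjective s
  exact ⟨p, q, rfl⟩

lemma frac_hom_ext {n : ℕ} {f : MvPolynomial (Fin n) ℂ} [IsDomain (HSurf f)]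
    {F : Type} [Field F] [Algebra ℂ F] (φ ψ : FractionRing (HSurf f) →ₐ[ℂ] F)
    (h : ∀ i, φ (cls f (X i)) = ψ (cls f (X i))) : φ = ψ := by
  have h' : φ.comp (clsA f) = ψ.comp (clsA f) := by
    ext i
    simpa [clsA_apply] using h i
  refine AlgHom.ext fun x => ?_
  obtain ⟨p, q, rfl⟩ := exists_div f x
  have hp := DFunLike.congr_fun h' p
  have hq := DFunLike.congr_fun h' q
  simp only [AlgHom.comp_apply] at hp hq
  rw [map_div₀, map_div₀, hp, hq]

lemma exists_lift {n : ℕ} {f : MvPolynomial (Fin n) ℂ} [IsDomain (HSurf f)]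
    {F : Type} [Field F] [Algebra ℂ F] (u : Fin n → F) (h0 : aeval u f = 0)
    (h : ∀ p, aeval u p = 0 → f ∣ p) :
    ∃ φ : FractionRing (HSurf f) →ₐ[ℂ] F, ∀ p, φ (cls f p) = aeval u p := by
  let g : HSurf f →ₐ[ℂ] F := Ideal.Quotient.liftₐ (Ideal.span {f}) (aeval u) (by
    intro p hp
    obtain ⟨r, rfl⟩ := Ideal.mem_span_singleton.1 hp
    simp [h0])
  have hg : Function.Injective g := by
    rw [injective_iff_map_eq_zero]
    intro x hx
    obtain ⟨p, rfl⟩ := Ideal.Quotient.mk_surjective x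
    rw [Ideal.Quotient.eq_zero_iff_mem, Ideal.mem_span_singleton]
    exact h p hx
  refine ⟨IsFractionRing.liftAlgHom (K := FractionRing (HSurf f)) hg, fun p => ?_⟩
  rw [IsFractionRing.liftAlgHom_apply, cls]
  exact IsFractionRing.lift_algebraMap hg _

lemma transfer {M : Type} [CommRing M] [Algebra ℂ M] {K₁ K₂ : Type} [Field K₁] [Algebra ℂ K₁]
    [Field K₂] [Algebra ℂ K₂] {n : ℕ} (I : M →ₐ[ℂ] K₁) (G : M →ₐ[ℂ] K₂)
    (d : M) (u : Fin n → K₁) (v : Fin n → K₂)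
    (huv : ∀ j, ∃ N m, u j * I d ^ m = I N ∧ v j * G d ^ m = G N) (p : MvPolynomial (Fin n) ℂ) :
    ∃ (N : M) (m : ℕ), aeval u p * I d ^ m = I N ∧ aeval v p * G d ^ m = G N := by
  induction p using MvPolynomial.induction_on with
  | C k => exact ⟨algebraMap ℂ M k, 0, by simp, by simp⟩
  | add p q hp hq =>
    obtain ⟨N, m, h1, h2⟩ := hp
    obtain ⟨N', m', h1', h2'⟩ := hq
    refine ⟨N * d ^ m' + N' * d ^ m, m + m', ?_, ?_⟩
    · simp only [map_add, map_mul, map_pow, ← h1, ← h1']; ring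
    · simp only [map_add, map_mul, map_pow, ← h2, ← h2']; ring
  | mul_X p j hp =>
    obtain ⟨N, m, h1, h2⟩ := hp
    obtain ⟨N', m', h1', h2'⟩ := huv j
    refine ⟨N * N', m + m', ?_, ?_⟩
    · simp only [map_mul, aeval_X, ← h1, ← h1']; ring
    · simp only [map_mul, aeval_X, ← h2, ← h2']; ring

lemma alg_two {F : Type} [Field F] (z t w A B α β : F) (hδ : A * β - B * α ≠ 0)
    (h : w ^ 3 * t ^ 3 * z * (z - 1) - (A * t + α) * (B * t + β) = 0) :
    (w * t / (A * β - B * α)) ^ 3 * (z * (z - 1) * A * B * (A * β - B * α))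
      - ((A * B * t + α * B) / (A * β - B * α)) * ((A * B * t + α * B) / (A * β - B * α) + 1)
      = 0 := by
  have e : (A * B * t + α * B) / (A * β - B * α) + 1 = A * (B * t + β) / (A * β - B * α) := by
    field_simp; ring
  rw [e]
  generalize A * β - B * α = δ at *
  field_simp
  linear_combination A * B * h

lemma alg_one {F : Type} [Field F] (z t w A B α β T : F) (hδ : A * β - B * α ≠ 0)
    (hA : A ≠ 0) (hB : B ≠ 0) (hT : T ≠ 0)
    (hT' : T = (t * (A * β - B * α) - α * B) / (A * B))
    (h : w ^ 3 * (z * (z - 1) * A * B * (A * β - B * α)) - t * (t + 1) = 0) :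
    (w * (A * β - B * α) / T) ^ 3 * T ^ 3 * z * (z - 1) - (A * T + α) * (B * T + β) = 0 := by
  have e1 : A * T + α = t * (A * β - B * α) / B := by rw [hT']; field_simp; ring
  have e2 : B * T + β = (t + 1) * (A * β - B * α) / A := by rw [hT']; field_simp; ring
  rw [e1, e2]
  generalize A * β - B * α = δ at *
  field_simp
  linear_combination δ ^ 2 * h

lemma omega_cube : (ω ^ 2) ^ 3 = 1 ∧ ω ^ 2 ≠ 1 := by
  have h : IsPrimitiveRoot ω 3 := by
    have := Complex.isPrimitiveRoot_exp 3 (by norm_num)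
    simpa [ω] using this
  refine ⟨by rw [← pow_mul, mul_comm, pow_mul, h.pow_eq_one, one_pow], ?_⟩
  exact h.pow_ne_one_of_pos_of_lt (by norm_num) (by norm_num)

lemma exists_twist (ζ : ℂ) (h3 : ζ ^ 3 = 1) :
    ∃ e : MvPolynomial (Fin 3) ℂ ≃ₐ[ℂ] MvPolynomial (Fin 3) ℂ,
      e (X 0) = X 0 ∧ e (X 1) = X 1 ∧ e (X 2) = C ζ * X 2 := by
  have hm : ζ * ζ ^ 2 = 1 := by rw [← h3]; ring
  have hm' : ζ ^ 2 * ζ = 1 := by rw [← h3]; ring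
  refine ⟨AlgEquiv.ofAlgHom (aeval ![X 0, X 1, C ζ * X 2]) (aeval ![X 0, X 1, C (ζ ^ 2) * X 2])
      (by
        ext i : 1
        fin_cases i
        · simp
        · simp
        · simp only [AlgHom.comp_apply, aeval_X, Fin.reduceFinMk, Matrix.cons_val, map_mul,
            algHom_C, algebraMap_eq, ← mul_assoc, ← C_mul, hm']
          simp)
      (by
        ext i : 1
        fin_cases i
        · simp
        · simp
        · simp only [AlgHom.comp_apply, aeval_X, Fin.reduceFinMk, Matrix.cons_val, map_mul,
            algHom_C, algebraMap_eq, ← mul_assoc, ← C_mul, hm]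
          simp), ?_, ?_, ?_⟩
  · exact aeval_X _ _
  · exact aeval_X _ _
  · exact aeval_X _ _

lemma exists_sigma (a b c : ℂ) [IsDomain (HSurf (pS₂ a b c))] :
    ∃ σ : FractionRing (HSurf (pS₂ a b c)) ≃ₐ[ℂ] FractionRing (HSurf (pS₂ a b c)),
      orderOf σ = 3 ∧
      σ (cls (pS₂ a b c) (X 2)) = (ω ^ 2 : ℂ) • cls (pS₂ a b c) (X 2) ∧
      σ (cls (pS₂ a b c) (X 0)) = cls (pS₂ a b c) (X 0) ∧
      σ (cls (pS₂ a b c) (X 1)) = cls (pS₂ a b c) (X 1) := by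
  obtain ⟨h3, hne⟩ := omega_cube
  generalize ω ^ 2 = ζ at *
  obtain ⟨e, e0, e1, e2⟩ := exists_twist ζ h3
  have eC (k : ℂ) : e (C k) = C k := e.commutes k
  have ef : e (pS₂ a b c) = pS₂ a b c := by
    have hC : (C ζ : MvPolynomial (Fin 3) ℂ) ^ 3 = 1 := by rw [← C_pow, h3, C_1]
    simp only [pS₂, A₁', B₁', map_sub, map_mul, map_add, map_pow, e0, e1, e2, eC, map_one, mul_pow,
      hC, one_mul]
  let q : HSurf (pS₂ a b c) ≃ₐ[ℂ] HSurf (pS₂ a b c) :=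
    Ideal.quotientEquivAlg _ _ e (by
      rw [Ideal.map_span, Set.image_singleton]
      change _ = Ideal.span {e (pS₂ a b c)}
      rw [ef])
  let σ : FractionRing (HSurf (pS₂ a b c)) ≃ₐ[ℂ] FractionRing (HSurf (pS₂ a b c)) :=
    IsFractionRing.algEquivOfAlgEquiv q
  have hσ (p) : σ (cls (pS₂ a b c) p) = cls (pS₂ a b c) (e p) :=
    IsFractionRing.algEquivOfAlgEquiv_algebraMap q _
  have s2 : σ (cls (pS₂ a b c) (X 2)) = ζ • cls (pS₂ a b c) (X 2) := by
    rw [hσ, e2, ← clsA_apply, ← clsA_apply, ← smul_eq_C_mul, map_smul]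
  have s0 : σ (cls (pS₂ a b c) (X 0)) = cls (pS₂ a b c) (X 0) := by rw [hσ, e0]
  have s1 : σ (cls (pS₂ a b c) (X 1)) = cls (pS₂ a b c) (X 1) := by rw [hσ, e1]
  refine ⟨σ, ?_, s2, s0, s1⟩
  have : Fact (Nat.Prime 3) := ⟨Nat.prime_three⟩
  refine orderOf_eq_prime ?_ ?_
  · have : (σ ^ 3 : _ ≃ₐ[ℂ] _).toAlgHom = AlgHom.id ℂ _ := by
      apply frac_hom_ext
      intro i
      change (σ ^ 3) _ = _
      rw [pow_succ, pow_two, AlgEquiv.mul_apply, AlgEquiv.mul_apply]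
      fin_cases i
      · simp [s0]
      · simp [s1]
      · simp only [Fin.reduceFinMk, s2, map_smul, smul_smul]
        rw [show ζ * ζ * ζ = 1 by rw [← h3]; ring]
        simp
    ext x
    exact DFunLike.congr_fun this x
  · intro h
    rw [h, AlgEquiv.one_apply] at s2
    have h0 : (ζ - 1) • cls (pS₂ a b c) (X 2) = 0 := by
      rw [sub_smul, one_smul, ← s2, sub_self]
    rcases smul_eq_zero.1 h0 with h0 | h0
    · exact hne (sub_eq_zero.1 h0)
    · rw [cls_eq_zero] at h0
      exact not_dvd_of_eval ![0, 0, 1] _ _ (by simp [pS₂]) (by simp) h0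

set_option maxHeartbeats 1000000 in
lemma core (a b c : ℂ) (ha0 : a ≠ 0) (hb0 : b ≠ 0)
    (hc0 : c ≠ 0) (hab : a ≠ b) (hac : a ≠ c) (hbc : b ≠ c) (ζ : ℂ)
    {K₁ K₂ : Type} [Field K₁] [Algebra ℂ K₁] [Field K₂] [Algebra ℂ K₂]
    (I : MvPolynomial (Fin 3) ℂ →ₐ[ℂ] K₁) (J : MvPolynomial (Fin 3) ℂ →ₐ[ℂ] K₂)
    (hI : ∀ p, I p = 0 ↔ pS₁ a b c ∣ p) (hJ : ∀ p, J p = 0 ↔ pS₂ a b c ∣ p)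
    (hdiv : ∀ x, ∃ p q, x = I p / I q)
    (hlift : ∀ u : Fin 3 → K₁, aeval u (pS₂ a b c) = 0 → (∀ p, aeval u p = 0 → pS₂ a b c ∣ p) →
      ∃ φ : K₂ →ₐ[ℂ] K₁, ∀ p, φ (J p) = aeval u p)
    (σ₂ : K₂ ≃ₐ[ℂ] K₂) (s2 : σ₂ (J (X 2)) = ζ • J (X 2))
    (s0 : σ₂ (J (X 0)) = J (X 0)) (s1 : σ₂ (J (X 1)) = J (X 1)) :
    ∃ (φ : K₂ ≃ₐ[ℂ] K₁) (σ₁ : K₁ ≃ₐ[ℂ] K₁),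
      orderOf σ₁ = orderOf σ₂ ∧
      σ₁ (I (X 0)) = ζ • I (X 0) ∧
      σ₁ (I (X 1)) = I (X 1) ∧
      σ₁ (I (X 2)) = I (X 2) ∧
      (∀ k, φ (σ₂ k) = σ₁ (φ k)) ∧
      φ (J (X 0)) = I (X 2) ∧
      φ (J (X 1)) * I (A₁ b c * C (b₁ a b c) - B₁ b c * C (a₁ a b c))
        = I (A₁ b c * B₁ b c * X 1 + C (a₁ a b c) * B₁ b c) ∧
      φ (J (X 2)) * I (A₁ b c * C (b₁ a b c) - B₁ b c * C (a₁ a b c))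
        = I (X 0 * X 1) := by
  have h1 : b - c ≠ 0 := sub_ne_zero.2 hbc
  have h2 : c - b ≠ 0 := sub_ne_zero.2 hbc.symm
  have h3 : a - b ≠ 0 := sub_ne_zero.2 hab
  have h4 : a - c ≠ 0 := sub_ne_zero.2 hac
  have ha₁ : a₁ a b c ≠ 0 := div_ne_zero h3 h1
  have hb₁ : b₁ a b c ≠ 0 := div_ne_zero h4 h2
  have hδ0 : (b - c)⁻¹ * b * b₁ a b c - (c - b)⁻¹ * c * a₁ a b c ≠ 0 := by
    have : (b - c)⁻¹ * b * b₁ a b c - (c - b)⁻¹ * c * a₁ a b c = - a * (b - c)⁻¹ := by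
      simp only [a₁, b₁]
      grind
    rw [this]
    simp [ha0, h1]
  have nz₁ (p) (x : Fin 3 → ℂ) (hx : eval x (pS₁ a b c) = 0) (hp : eval x p ≠ 0) : I p ≠ 0 :=
    fun h => not_dvd_of_eval x _ _ hx hp ((hI _).1 h)
  have nz₂ (p) (x : Fin 3 → ℂ) (hx : eval x (pS₂ a b c) = 0) (hp : eval x p ≠ 0) : J p ≠ 0 :=
    fun h => not_dvd_of_eval x _ _ hx hp ((hJ _).1 h)
  have I0 : I (pS₁ a b c) = 0 := (hI _).2 dvd_rfl
  have J0 : J (pS₂ a b c) = 0 := (hJ _).2 dvd_rfl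
  have IC (k) : I (C k) = algebraMap ℂ _ k := I.commutes k
  have JC (k) : J (C k) = algebraMap ℂ _ k := J.commutes k
  let δ : MvPolynomial (Fin 3) ℂ := A₁ b c * C (b₁ a b c) - B₁ b c * C (a₁ a b c)
  let δ' : MvPolynomial (Fin 3) ℂ := A₁' b c * C (b₁ a b c) - B₁' b c * C (a₁ a b c)
  have hδ : I δ ≠ 0 := by
    refine nz₁ _ ![0, - a₁ a b c / ((b - c)⁻¹ * b), 0] ?_ ?_
    · simp [pS₁, A₁]
      left
      field_simp
      simp
    · simpa [δ, A₁, B₁] using hδ0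
  have hδ' : J δ' ≠ 0 := by
    refine nz₂ _ ![0, 0, 0] ?_ ?_
    · simp [pS₂]
    · simpa [δ', A₁', B₁'] using hδ0
  have hA' : J (A₁' b c) ≠ 0 := nz₂ _ ![0, 0, 0] (by simp [pS₂]) (by simp [A₁', h1, hb0])
  have hB' : J (B₁' b c) ≠ 0 := nz₂ _ ![0, 0, 0] (by simp [pS₂]) (by simp [B₁', h2, hc0])
  have hT0 : J (X 1 * δ' - C (a₁ a b c) * B₁' b c) ≠ 0 :=
    nz₂ _ ![0, 0, 0] (by simp [pS₂]) (by simp [B₁', h2, hc0, ha₁])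
  have eδ : I δ = I (A₁ b c) * I (C (b₁ a b c)) - I (B₁ b c) * I (C (a₁ a b c)) := by
    simp only [δ, map_sub, map_mul]
  have eδ' : J δ' = J (A₁' b c) * J (C (b₁ a b c)) - J (B₁' b c) * J (C (a₁ a b c)) := by
    simp only [δ', map_sub, map_mul]
  obtain ⟨T, hT⟩ : ∃ T, T = J (X 1 * δ' - C (a₁ a b c) * B₁' b c) / (J (A₁' b c) * J (B₁' b c)) :=
    ⟨_, rfl⟩
  have hTne : T ≠ 0 := by
    rw [hT]; exact div_ne_zero hT0 (mul_ne_zero hA' hB')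
  let u : Fin 3 → K₁ :=
    ![I (X 2), I (A₁ b c * B₁ b c * X 1 + C (a₁ a b c) * B₁ b c) / I δ, I (X 0 * X 1) / I δ]
  let v : Fin 3 → K₂ := ![J (X 2) * J δ' / T, T, J (X 0)]
  have u0 : u 0 = I (X 2) := rfl
  have u1 : u 1 = I (A₁ b c * B₁ b c * X 1 + C (a₁ a b c) * B₁ b c) / I δ := rfl
  have u2 : u 2 = I (X 0 * X 1) / I δ := rfl
  have v0 : v 0 = J (X 2) * J δ' / T := rfl
  have v1 : v 1 = T := rfl
  have v2 : v 2 = J (X 0) := rfl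
  have uC (k) : aeval u (C k) = I (C k) := by rw [IC, algHom_C]
  have vC (k) : aeval v (C k) = J (C k) := by rw [JC, algHom_C]
  have uA : aeval u (A₁' b c) = I (A₁ b c) := by
    simp only [A₁, A₁', map_mul, map_sub, uC, aeval_X, u0]
  have uB : aeval u (B₁' b c) = I (B₁ b c) := by
    simp only [B₁, B₁', map_mul, map_sub, uC, aeval_X, u0]
  have vA : aeval v (A₁ b c) = J (A₁' b c) := by
    simp only [A₁, A₁', map_mul, map_sub, vC, aeval_X, v2]
  have vB : aeval v (B₁ b c) = J (B₁' b c) := by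
    simp only [B₁, B₁', map_mul, map_sub, vC, aeval_X, v2]
  have vδ : aeval v δ = J δ' := by
    simp only [δ, δ', map_mul, map_sub, vC, vA, vB]
  have hu : aeval u (pS₂ a b c) = 0 := by
    simp only [pS₁, map_sub, map_mul, map_add, map_pow, map_one] at I0
    rw [eδ] at hδ
    have := alg_two _ _ _ _ _ _ _ hδ I0
    simp only [pS₂, map_sub, map_mul, map_add, map_pow, map_one, uA, uB, uC, aeval_X, u0, u1, u2,
      eδ]
    exact this
  have hv : aeval v (pS₁ a b c) = 0 := by
    simp only [pS₂, map_sub, map_mul, map_add, map_pow, map_one] at J0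
    rw [eδ'] at hδ'
    have := alg_one _ _ _ _ _ _ _ T hδ' hA' hB' hTne
      (by rw [hT]; simp only [map_sub, map_mul, eδ']) J0
    simp only [pS₁, map_sub, map_mul, map_add, map_pow, map_one, vA, vB, vC, aeval_X, v0, v1, v2,
      eδ']
    exact this
  have hTeq : J (X 1) * J δ' = J (A₁' b c) * J (B₁' b c) * T + J (C (a₁ a b c)) * J (B₁' b c) := by
    rw [hT, mul_div_cancel₀ _ (mul_ne_zero hA' hB')]
    simp only [map_sub, map_mul]
    ring
  have hJa : aeval (fun i => J (X i)) = J := (aeval_unique J).symm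
  have hinj : ∀ p, aeval u p = 0 → pS₂ a b c ∣ p := by
    intro p hp
    obtain ⟨N, m, hN1, hN2⟩ := transfer I (aeval v) δ u (fun i => J (X i)) (by
      intro j
      fin_cases j
      · exact ⟨X 2, 0, by rw [pow_zero, mul_one]; exact u0, by rw [pow_zero, mul_one, aeval_X]; exact v2.symm⟩
      · refine ⟨A₁ b c * B₁ b c * X 1 + C (a₁ a b c) * B₁ b c, 1, ?_, ?_⟩
        · rw [pow_one]
          exact div_mul_cancel₀ _ hδ
        · simp only [map_add, map_mul, vA, vB, vC, vδ, aeval_X, v1, pow_one]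
          exact hTeq
      · refine ⟨X 0 * X 1, 1, ?_, ?_⟩
        · rw [pow_one]
          exact div_mul_cancel₀ _ hδ
        · simp only [map_mul, vδ, aeval_X, v0, v1, pow_one]
          exact (div_mul_cancel₀ _ hTne).symm) p
    rw [hp, zero_mul] at hN1
    obtain ⟨r, rfl⟩ := (hI _).1 hN1.symm
    rw [map_mul, hv, zero_mul, hJa, vδ] at hN2
    exact (hJ _).1 ((mul_eq_zero.1 hN2).resolve_right (pow_ne_zero _ hδ'))
  obtain ⟨φ₀, hφ₀⟩ := hlift u hu hinj
  have hφJ (p) : φ₀ (J p) = aeval u p := hφ₀ p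
  have φA : φ₀ (J (A₁' b c)) = I (A₁ b c) := by rw [hφJ, uA]
  have φB : φ₀ (J (B₁' b c)) = I (B₁ b c) := by rw [hφJ, uB]
  have φδ : φ₀ (J δ') = I δ := by
    rw [hφJ]; simp only [δ, δ', map_mul, map_sub, uC, uA, uB]
  have hAI : I (A₁ b c) ≠ 0 := by rw [← φA]; exact (map_ne_zero φ₀).2 hA'
  have hBI : I (B₁ b c) ≠ 0 := by rw [← φB]; exact (map_ne_zero φ₀).2 hB'
  have φT : φ₀ T = I (X 1) := by
    have h := congrArg φ₀ hTeq
    simp only [map_add, map_mul, φA, φB, φδ] at h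
    rw [hφJ, hφJ, uC, aeval_X, u1, div_mul_cancel₀ _ hδ] at h
    simp only [map_add, map_mul] at h
    exact (mul_left_cancel₀ (mul_ne_zero hAI hBI) (add_right_cancel h)).symm
  have hI1 : I (X 1) ≠ 0 := by rw [← φT]; exact (map_ne_zero φ₀).2 hTne
  have φv : ∀ i, φ₀ (v i) = I (X i) := by
    intro i
    fin_cases i
    · change φ₀ (J (X 2) * J δ' / T) = _
      rw [map_div₀, map_mul, φδ, φT, hφJ, aeval_X, u2, div_mul_cancel₀ _ hδ, map_mul]
      exact mul_div_cancel_right₀ _ hI1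
    · exact φT
    · change φ₀ (J (X 0)) = _
      rw [hφJ, aeval_X, u0]
      rfl
  have φI (p) : φ₀ (aeval v p) = I p := by
    have : φ₀.comp (aeval v) = I := by
      refine MvPolynomial.algHom_ext fun i => ?_
      rw [AlgHom.comp_apply, aeval_X]; exact φv i
    exact DFunLike.congr_fun this p
  have hbij : Function.Bijective φ₀ := by
    refine ⟨φ₀.toRingHom.injective, fun x => ?_⟩
    obtain ⟨p, q, rfl⟩ := hdiv x
    refine ⟨aeval v p / aeval v q, ?_⟩
    rw [map_div₀, φI, φI]
  let φ := AlgEquiv.ofBijective φ₀ hbij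
  have hφ (x) : φ x = φ₀ x := rfl
  have φs (i) : φ.symm (I (X i)) = v i := by
    rw [← φv, ← hφ, AlgEquiv.symm_apply_apply]
  let c' := AlgEquiv.autCongr φ
  have hc' (σ x) : c' σ x = φ (σ (φ.symm x)) := rfl
  have sC (k) : σ₂ (J (C k)) = J (C k) := by rw [JC, AlgEquiv.commutes]
  have sA : σ₂ (J (A₁' b c)) = J (A₁' b c) := by
    simp only [A₁', map_mul, map_sub, sC, s0]
  have sB : σ₂ (J (B₁' b c)) = J (B₁' b c) := by
    simp only [B₁', map_mul, map_sub, sC, s0]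
  have sδ : σ₂ (J δ') = J δ' := by
    simp only [δ', map_mul, map_sub, sC, sA, sB]
  have sT : σ₂ T = T := by
    rw [hT]
    simp only [map_div₀, map_mul, map_sub, sC, sA, sB, sδ, s1]
  refine ⟨φ, c' σ₂, ?_, ?_, ?_, ?_, ?_, ?_, ?_, ?_⟩
  · exact orderOf_injective c'.toMonoidHom c'.injective σ₂
  · change c' σ₂ (I (X 0)) = _ • I (X 0)
    rw [hc', φs, ← φv 0, ← hφ, ← map_smul]
    congr 1
    rw [v0, map_div₀, map_mul, s2, sδ, sT, smul_mul_assoc, smul_div_assoc]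
  · change c' σ₂ (I (X 1)) = I (X 1)
    rw [hc', φs, v1, sT]
    exact φT
  · change c' σ₂ (I (X 2)) = I (X 2)
    rw [hc', φs, v2, s0]
    exact φv 2
  · intro k
    rw [hc', AlgEquiv.symm_apply_apply]
  · exact φv 2
  · change φ₀ (J (X 1)) * I δ = I _
    rw [hφJ, aeval_X, u1, div_mul_cancel₀ _ hδ]
  · change φ₀ (J (X 2)) * I δ = I _
    rw [hφJ, aeval_X, u2, div_mul_cancel₀ _ hδ]

/-- For pairwise distinct `a, b, c ∈ ℂ ∖ {0,1}` there is a `ℂ`-algebra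
isomorphism between the function fields of `S₁` and `S₂` intertwining the order-3
automorphisms `w ↦ ω²·w` and `w₁ ↦ ω²·w₁` (each fixing the remaining coordinates); an
isomorphism is induced by the substitution `t₃ = (t₂ + a₁/A₁)/(b₁/B₁ − a₁/A₁)`,
`w₁ = w·t₂/(A₁B₁·(b₁/B₁ − a₁/A₁))`, with `z` unchanged.  (We record the induced
isomorphism in the direction `φ : Frac(S₂) → Frac(S₁)`; since
`A₁B₁(b₁/B₁ − a₁/A₁) = A₁b₁ − B₁a₁`, the substitution reads, denominator-free,
`φ(t₃)·(A₁b₁ − B₁a₁) = A₁B₁·t₂ + a₁·B₁` and `φ(w₁)·(A₁b₁ − B₁a₁) = w·t₂`.) -/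
theorem stmt5 (a b c : ℂ) (ha0 : a ≠ 0) (ha1 : a ≠ 1) (hb0 : b ≠ 0) (hb1 : b ≠ 1)
    (hc0 : c ≠ 0) (hc1 : c ≠ 1) (hab : a ≠ b) (hac : a ≠ c) (hbc : b ≠ c) :
    ∃ (φ : FractionRing (HSurf (pS₂ a b c)) ≃ₐ[ℂ] FractionRing (HSurf (pS₁ a b c)))
      (σ₁ : FractionRing (HSurf (pS₁ a b c)) ≃ₐ[ℂ] FractionRing (HSurf (pS₁ a b c)))
      (σ₂ : FractionRing (HSurf (pS₂ a b c)) ≃ₐ[ℂ] FractionRing (HSurf (pS₂ a b c))),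
      orderOf σ₁ = 3 ∧
      σ₁ (cls (pS₁ a b c) (X 0)) = (ω ^ 2 : ℂ) • cls (pS₁ a b c) (X 0) ∧
      σ₁ (cls (pS₁ a b c) (X 1)) = cls (pS₁ a b c) (X 1) ∧
      σ₁ (cls (pS₁ a b c) (X 2)) = cls (pS₁ a b c) (X 2) ∧
      orderOf σ₂ = 3 ∧
      σ₂ (cls (pS₂ a b c) (X 2)) = (ω ^ 2 : ℂ) • cls (pS₂ a b c) (X 2) ∧
      σ₂ (cls (pS₂ a b c) (X 0)) = cls (pS₂ a b c) (X 0) ∧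
      σ₂ (cls (pS₂ a b c) (X 1)) = cls (pS₂ a b c) (X 1) ∧
      (∀ k, φ (σ₂ k) = σ₁ (φ k)) ∧
      φ (cls (pS₂ a b c) (X 0)) = cls (pS₁ a b c) (X 2) ∧
      φ (cls (pS₂ a b c) (X 1))
          * cls (pS₁ a b c) (A₁ b c * C (b₁ a b c) - B₁ b c * C (a₁ a b c))
        = cls (pS₁ a b c) (A₁ b c * B₁ b c * X 1 + C (a₁ a b c) * B₁ b c) ∧
      φ (cls (pS₂ a b c) (X 2))
          * cls (pS₁ a b c) (A₁ b c * C (b₁ a b c) - B₁ b c * C (a₁ a b c))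
        = cls (pS₁ a b c) (X 0 * X 1) := by
  have hp₁ := prime_pS₁ a b c hb0 hb1 hc0 hc1 hab hac hbc
  have hp₂ := prime_pS₂ a b c ha0 ha1 hb0 hb1 hc0 hc1 hab hac hbc
  have := isDomain_of_prime hp₁
  have := isDomain_of_prime hp₂
  obtain ⟨σ₂, ho, s2, s0, s1⟩ := exists_sigma a b c
  obtain ⟨φ, σ₁, h⟩ := core a b c ha0 hb0 hc0 hab hac hbc (ω ^ 2)
    (clsA (pS₁ a b c)) (clsA (pS₂ a b c)) (cls_eq_zero _) (cls_eq_zero _) (exists_div _)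
    (fun u h0 h => exists_lift u h0 h) σ₂ s2 s0 s1
  rw [ho] at h
  obtain ⟨q1, q2, q3, q4, q5, q6, q7, q8⟩ := h
  exact ⟨φ, σ₁, σ₂, q1, q2, q3, q4, ho, s2, s0, s1, q5, q6, q7, q8⟩
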